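/- Let n ≥ 1 and let u : ℝ^{n+1} × [0,∞) → ℝ be a smooth graphical solution to mean curvature flow ∂u/∂t = √(1+|Du|²) · div( Du/√(1+|Du|²) ). Let M ≥ 1 be such that |Du(x,t)| ≤ M at all points where u(x,t) ≤ 0. Fix x₀ ∈ ℝ^{n+1}, t₁ ≥ 0 with u(x₀,t₁) ≤ −1, and 0 < r ≤ 1/M. Then u(x₀,t₁) − (M+1)·r ≤ u(x₀, t₁ + r²/(2(n+1))) ≤ u(x₀,t₁) + (M+1)·r. -/

import Mathlib

/-
The squared distance `d` from a fixed point `(x₀, c)` to the graph of `u(·, t)` plays the role of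
the shrinking sphere. At a spatial minimum of `d` its Hessian `2 (g + (u - c) D²u)` is nonnegative,
where `g = δ + Du ⊗ Du` is the metric of the graph. The equation says that the trace of `D²u` with
respect to `g` is `∂u/∂t`, so taking that trace gives `∂d/∂t ≥ -2m` on a base space of dimension
`m`. By the minimum principle on a cylinder, the centre of a ball of radius `r` that is disjoint
from the graph at time `t₁` is not reached before time `t₁ + r² / (2m)`.

The gradient bound holds where `u ≤ 0`, hence on the whole ball of radius `r` about `x₀`, because
there `u` can rise by at most `M r` above `u(x₀, t₁)`. So a ball of radius `r` whose centre
`(x₀, c)` satisfies `|u(x₀, t₁) - c| = (M + 1) r` misses the initial graph. If `u(x₀, ·)` moved by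
more than `(M + 1) r`, it would pass through such a centre too early.
-/

open Set Filter Topology Metric

noncomputable section

/-- Divergence of a vector field on Euclidean space. -/
def vecDiv {m : ℕ} (X : EuclideanSpace ℝ (Fin m) → EuclideanSpace ℝ (Fin m))
    (x : EuclideanSpace ℝ (Fin m)) : ℝ :=
  ∑ i, fderiv ℝ X x (EuclideanSpace.single i 1) i

/-- Spatial gradient of a time-dependent function. -/
def spatialGrad {m : ℕ} (u : EuclideanSpace ℝ (Fin m) × ℝ → ℝ)
    (x : EuclideanSpace ℝ (Fin m)) (t : ℝ) : EuclideanSpace ℝ (Fin m) :=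
  gradient (fun y => u (y, t)) x

/-- The gradient function `v = √(1+|Du|²)` of the graph of `u(·,t)`. -/
def gradFn {m : ℕ} (u : EuclideanSpace ℝ (Fin m) × ℝ → ℝ)
    (x : EuclideanSpace ℝ (Fin m)) (t : ℝ) : ℝ :=
  Real.sqrt (1 + ‖spatialGrad u x t‖ ^ 2)

/-- Graphical mean curvature flow equation
`∂u/∂t = √(1+|Du|²) · div(Du/√(1+|Du|²))` at the point `(x,t)`. -/
def mcfEqAt {m : ℕ} (u : EuclideanSpace ℝ (Fin m) × ℝ → ℝ)
    (x : EuclideanSpace ℝ (Fin m)) (t : ℝ) : Prop :=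
  deriv (fun s => u (x, s)) t
    = gradFn u x t * vecDiv (fun y => (gradFn u y t)⁻¹ • spatialGrad u y t) x

open scoped Gradient RealInnerProductSpace

section Calculus

variable {E : Type*} [NormedAddCommGroup E] [NormedSpace ℝ E]

lemma deriv_deriv_nonneg_of_isLocalMin {f : ℝ → ℝ} {a : ℝ} (hmin : IsLocalMin f a)
    (hf : ContinuousAt f a) : 0 ≤ deriv (deriv f) a := by
  by_contra! hneg
  have hmax : IsLocalMax f a := isLocalMax_of_deriv_deriv_neg hneg hmin.deriv_eq_zero hf
  have hconst : f =ᶠ[𝓝 a] fun _ => f a := by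
    filter_upwards [hmin, hmax] with y hy hy' using le_antisymm hy' hy
  have hzero : deriv (deriv f) a = 0 := by simpa using hconst.deriv.deriv_eq
  exact hneg.ne hzero

lemma fderiv_fderiv_self_nonneg_of_isLocalMin {ψ : E → ℝ} {x : E} (hmin : IsLocalMin ψ x)
    (hψ : ContDiffAt ℝ 2 ψ x) (w : E) : 0 ≤ fderiv ℝ (fderiv ℝ ψ) x w w := by
  set line : ℝ → E := fun τ => x + τ • w with hline
  have hline' (τ : ℝ) : HasDerivAt line w τ := by
    simpa [hline] using ((hasDerivAt_id τ).smul_const w).const_add x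
  have hline0 : line 0 = x := by simp [hline]
  have htendsto : Tendsto line (𝓝 0) (𝓝 x) := hline0 ▸ (hline' 0).continuousAt.tendsto
  have hfirst : deriv (ψ ∘ line) =ᶠ[𝓝 0] fun τ => fderiv ℝ ψ (line τ) w := by
    filter_upwards [htendsto.eventually (hψ.eventually (by simp))] with τ hτ
    exact ((hτ.differentiableAt (by simp)).hasFDerivAt.comp_hasDerivAt τ (hline' τ)).deriv
  have hsecond : HasDerivAt (fun τ => fderiv ℝ ψ (line τ) w) (fderiv ℝ (fderiv ℝ ψ) x w w) 0 := by
    have hdiff : HasFDerivAt (fderiv ℝ ψ) (fderiv ℝ (fderiv ℝ ψ) x) (line 0) := by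
      rw [hline0]
      exact ((hψ.fderiv_right (m := 1) (by norm_num)).differentiableAt (by simp)).hasFDerivAt
    simpa using (hdiff.comp_hasDerivAt 0 (hline' 0)).clm_apply (hasDerivAt_const (0 : ℝ) w)
  have hmin0 : IsLocalMin (ψ ∘ line) 0 := by
    filter_upwards [htendsto.eventually hmin] with τ hτ
    simpa [hline0] using hτ
  have hcont : ContinuousAt (ψ ∘ line) 0 :=
    ContinuousAt.comp (hline0.symm ▸ hψ.continuousAt) (hline' 0).continuousAt
  calc 0 ≤ deriv (deriv (ψ ∘ line)) 0 := deriv_deriv_nonneg_of_isLocalMin hmin0 hcont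
    _ = fderiv ℝ (fderiv ℝ ψ) x w w := by rw [hfirst.deriv_eq, hsecond.deriv]

lemma deriv_nonpos_of_isMinOn_Icc {f : ℝ → ℝ} {a b : ℝ} (hab : a < b)
    (hmin : IsMinOn f (Icc a b) b) : deriv f b ≤ 0 := by
  by_cases hf : DifferentiableAt ℝ f b
  · have hcone : a - b ∈ posTangentConeAt (Icc a b) b :=
      sub_mem_posTangentConeAt_of_segment_subset (by rw [segment_symm, segment_eq_Icc hab.le])
    have hslope := hmin.localize.hasFDerivWithinAt_nonneg
      hf.hasDerivAt.hasFDerivAt.hasFDerivWithinAt hcone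
    simp only [ContinuousLinearMap.toSpanSingleton_apply, smul_eq_mul] at hslope
    exact nonpos_of_mul_nonneg_right hslope (sub_neg.2 hab)
  · exact (deriv_zero_of_not_differentiableAt hf).le

/- Along a ray from `x₀` with direction `w`, the value `φ x₀ + τ * (M * r)` cannot be crossed
since the slope of `φ` there is at most `M * ‖w‖ < M * r`. -/
lemma le_add_mul_of_norm_fderiv_le {φ : E → ℝ} {x₀ : E} {M r : ℝ} (hM : 0 < M)
    (hφ : ∀ y ∈ ball x₀ r, DifferentiableAt ℝ φ y)
    (hbound : ∀ y ∈ ball x₀ r, φ y ≤ φ x₀ + M * r → ‖fderiv ℝ φ y‖ ≤ M) {x : E}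
    (hx : x ∈ ball x₀ r) : φ x ≤ φ x₀ + M * r := by
  set w := x - x₀
  have hw : M * ‖w‖ < M * r := mul_lt_mul_of_pos_left (mem_ball_iff_norm.1 hx) hM
  have hr : 0 < r := pos_of_mem_ball hx
  have hball {τ : ℝ} (hτ : τ ∈ Icc (0 : ℝ) 1) : x₀ + τ • w ∈ ball x₀ r :=
    (convex_ball x₀ r).add_smul_sub_mem (mem_ball_self hr) hx hτ
  have hray {τ : ℝ} (hτ : τ ∈ Icc (0 : ℝ) 1) :
      HasDerivAt (fun τ : ℝ => φ (x₀ + τ • w)) (fderiv ℝ φ (x₀ + τ • w) w) τ :=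
    (hφ _ (hball hτ)).hasFDerivAt.comp_hasDerivAt τ
      (by simpa using ((hasDerivAt_id τ).smul_const w).const_add x₀)
  have hbarrier := image_le_of_deriv_right_lt_deriv_boundary (a := 0) (b := 1)
    (B := fun τ => φ x₀ + τ * (M * r)) (B' := fun _ => M * r)
    (fun τ hτ => (hray hτ).continuousAt.continuousWithinAt)
    (fun τ hτ => (hray (Ico_subset_Icc_self hτ)).hasDerivWithinAt) (by simp)
    (fun τ => by simpa using ((hasDerivAt_id τ).mul_const (M * r)).const_add (φ x₀))
    (fun τ hτ hcross => by
      have hle : φ (x₀ + τ • w) ≤ φ x₀ + M * r := by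
        rw [hcross]
        have := mul_le_of_le_one_left (mul_pos hM hr).le hτ.2.le
        linarith
      calc fderiv ℝ φ (x₀ + τ • w) w ≤ ‖fderiv ℝ φ (x₀ + τ • w) w‖ := le_abs_self _
        _ ≤ M * ‖w‖ := ContinuousLinearMap.le_of_opNorm_le _
            (hbound _ (hball (Ico_subset_Icc_self hτ)) hle) w
        _ < M * r := hw)
    (right_mem_Icc.2 zero_le_one)
  simpa [w] using hbarrier

lemma abs_sub_le_of_norm_fderiv_le {φ : E → ℝ} {x₀ : E} {M r : ℝ} (hM : 0 < M)
    (hφ : ∀ y ∈ ball x₀ r, DifferentiableAt ℝ φ y)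
    (hbound : ∀ y ∈ ball x₀ r, φ y ≤ φ x₀ + M * r → ‖fderiv ℝ φ y‖ ≤ M) {x : E}
    (hx : x ∈ ball x₀ r) : |φ x - φ x₀| ≤ M * ‖x - x₀‖ :=
  (convex_ball x₀ r).norm_image_sub_le_of_norm_fderiv_le hφ
    (fun y hy => hbound y hy (le_add_mul_of_norm_fderiv_le hM hφ hbound hy))
    (mem_ball_self (pos_of_mem_ball hx)) hx

end Calculus

section MinimumPrinciple

variable {X : Type*} [TopologicalSpace X] {K : Set X} {a b R : ℝ} {f : X → ℝ → ℝ}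

lemma le_of_deriv_pos_of_isLocalMin (hK : IsCompact K)
    (hf : ContinuousOn (fun q : X × ℝ => f q.1 q.2) (K ×ˢ Icc a b))
    (hinit : ∀ x ∈ K, R ≤ f x a) (hfrontier : ∀ x ∈ frontier K, ∀ t ∈ Icc a b, R ≤ f x t)
    (hderiv : ∀ x ∈ interior K, ∀ t ∈ Ioc a b, IsLocalMin (f · t) x → 0 < deriv (f x) t)
    {x : X} (hx : x ∈ K) {t : ℝ} (ht : t ∈ Icc a b) : R ≤ f x t := by
  by_contra! hlt
  obtain ⟨⟨y, s⟩, ⟨hy, hs⟩, hmin⟩ :=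
    (hK.prod isCompact_Icc).exists_isMinOn ⟨(x, t), hx, ht⟩ hf
  have hys : f y s < R := (hmin (mk_mem_prod hx ht)).trans_lt hlt
  have hyint : y ∈ interior K := by
    by_contra hyint
    exact (hfrontier y ⟨subset_closure hy, hyint⟩ s hs).not_gt hys
  have has : a < s := by
    refine hs.1.lt_of_ne ?_
    rintro rfl
    exact (hinit y hy).not_gt hys
  have hspace : IsLocalMin (f · s) y := by
    filter_upwards [mem_interior_iff_mem_nhds.1 hyint] with z hz using hmin (mk_mem_prod hz hs)
  have htime : IsMinOn (f y) (Icc a s) s := fun τ hτ =>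
    hmin (mk_mem_prod hy ⟨hτ.1, hτ.2.trans hs.2⟩)
  exact (deriv_nonpos_of_isMinOn_Icc has htime).not_gt (hderiv y hyint s ⟨has, hs.2⟩ hspace)

lemma le_of_deriv_nonneg_of_isLocalMin (hK : IsCompact K)
    (hf : ContinuousOn (fun q : X × ℝ => f q.1 q.2) (K ×ˢ Icc a b))
    (hdiff : ∀ x ∈ interior K, ∀ t ∈ Ioc a b, DifferentiableAt ℝ (f x) t)
    (hinit : ∀ x ∈ K, R ≤ f x a) (hfrontier : ∀ x ∈ frontier K, ∀ t ∈ Icc a b, R ≤ f x t)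
    (hderiv : ∀ x ∈ interior K, ∀ t ∈ Ioc a b, IsLocalMin (f · t) x → 0 ≤ deriv (f x) t)
    {x : X} (hx : x ∈ K) {t : ℝ} (ht : t ∈ Icc a b) : R ≤ f x t := by
  have hperturbed (ε : ℝ) (hε : 0 < ε) : R ≤ f x t + ε * (t - a) := by
    refine le_of_deriv_pos_of_isLocalMin (f := fun y s => f y s + ε * (s - a)) hK
      (hf.add (by fun_prop)) (by simpa using hinit) (fun y hy s hs => ?_)
      (fun y hy s hs hmin => ?_) hx ht
    · exact (hfrontier y hy s hs).trans
        (le_add_of_nonneg_right (mul_nonneg hε.le (sub_nonneg.2 hs.1)))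
    · have hderiv_add : HasDerivAt (fun τ => f y τ + ε * (τ - a)) (deriv (f y) s + ε) s := by
        simpa using (hdiff y hy s hs).hasDerivAt.fun_add
          (((hasDerivAt_id s).sub_const a).const_mul ε)
      have hmin' : IsLocalMin (f · s) y := by
        filter_upwards [hmin] with z hz using le_of_add_le_add_right hz
      rw [hderiv_add.deriv]
      exact add_pos_of_nonneg_of_pos (hderiv y hy s hs hmin') hε
  have hlim : Tendsto (fun ε => f x t + ε * (t - a)) (𝓝[>] 0) (𝓝 (f x t)) := by
    have : Continuous fun ε => f x t + ε * (t - a) := by fun_prop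
    simpa using (this.tendsto 0).mono_left nhdsWithin_le_nhds
  exact ge_of_tendsto hlim (eventually_mem_nhdsWithin.mono hperturbed)

end MinimumPrinciple

section SquaredDistance

variable {E : Type*} [NormedAddCommGroup E]

/-- The squared distance from the point `(x₀, c)` of `E × ℝ` to the point of the graph of `φ`
above `x`. -/
def graphSqDist (φ : E → ℝ) (x₀ : E) (c : ℝ) (x : E) : ℝ :=
  ‖x - x₀‖ ^ 2 + (φ x - c) ^ 2

lemma sq_norm_sub_le_graphSqDist (φ : E → ℝ) (x₀ : E) (c : ℝ) (x : E) :
    ‖x - x₀‖ ^ 2 ≤ graphSqDist φ x₀ c x :=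
  le_add_of_nonneg_right (sq_nonneg _)

lemma sq_le_graphSqDist_of_norm_fderiv_le [NormedSpace ℝ E] {φ : E → ℝ} {x₀ : E} {M r c : ℝ}
    (hM : 0 < M) (hr : 0 ≤ r) (hφ : ∀ y ∈ ball x₀ r, DifferentiableAt ℝ φ y)
    (hbound : ∀ y ∈ ball x₀ r, φ y ≤ φ x₀ + M * r → ‖fderiv ℝ φ y‖ ≤ M)
    (hsep : (M + 1) * r ≤ |φ x₀ - c|) (x : E) : r ^ 2 ≤ graphSqDist φ x₀ c x := by
  by_cases hx : x ∈ ball x₀ r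
  · have hclose : |φ x - φ x₀| ≤ M * r :=
      (abs_sub_le_of_norm_fderiv_le hM hφ hbound hx).trans
        (mul_le_mul_of_nonneg_left (mem_ball_iff_norm.1 hx).le hM.le)
    have hvert : r ≤ |φ x - c| := by
      have htri := abs_sub_le (φ x₀) (φ x) c
      rw [abs_sub_comm (φ x₀) (φ x)] at htri
      linarith
    calc r ^ 2 ≤ (φ x - c) ^ 2 := sq_abs (φ x - c) ▸ pow_le_pow_left₀ hr hvert 2
      _ ≤ graphSqDist φ x₀ c x := le_add_of_nonneg_left (sq_nonneg _)
  · rw [mem_ball_iff_norm, not_lt] at hx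
    exact (pow_le_pow_left₀ hr hx 2).trans (sq_norm_sub_le_graphSqDist φ x₀ c x)

end SquaredDistance

section TimeSlices

variable {E F : Type*} [NormedAddCommGroup E] [NormedSpace ℝ E] [NormedAddCommGroup F]
  [NormedSpace ℝ F] {u : E × ℝ → F} {t₁ : ℝ}

lemma contDiff_spatial_slice {k : WithTop ℕ∞} (hu : ContDiffOn ℝ k u {p | t₁ ≤ p.2}) {t : ℝ}
    (ht : t₁ ≤ t) : ContDiff ℝ k fun y => u (y, t) :=
  hu.comp_contDiff (by fun_prop) fun _ => ht

lemma contDiffAt_of_initialTime_lt {k : WithTop ℕ∞} (hu : ContDiffOn ℝ k u {p | t₁ ≤ p.2})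
    (x : E) {t : ℝ} (ht : t₁ < t) : ContDiffAt ℝ k u (x, t) :=
  hu.contDiffAt (continuousAt_snd.eventually (Ici_mem_nhds ht))

lemma hasDerivAt_graphSqDist_time {u : E × ℝ → ℝ} {x : E} {t : ℝ}
    (hu : DifferentiableAt ℝ u (x, t)) (x₀ : E) (c : ℝ) :
    HasDerivAt (fun s => graphSqDist (fun y => u (y, s)) x₀ c x)
      (2 * ((u (x, t) - c) * deriv (fun s => u (x, s)) t)) t := by
  have htime : DifferentiableAt ℝ (fun s => u (x, s)) t := hu.comp t (by fun_prop)
  refine (((htime.hasDerivAt.sub_const c).fun_pow 2).const_add (‖x - x₀‖ ^ 2)).congr_deriv ?_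
  ring

end TimeSlices

section GraphGeometry

variable {E : Type*} [NormedAddCommGroup E] [InnerProductSpace ℝ E]

/-- The inner product as a bilinear form. Unlike `innerSL ℝ`, whose type is semilinear in the first
argument over `starRingEnd ℝ`, it can be added to Hessians. -/
def innerBilin : E →L[ℝ] E →L[ℝ] ℝ := innerSL ℝ

lemma innerBilin_apply (v w : E) : innerBilin v w = ⟪v, w⟫ := rfl

/-- The metric `g = δ + p ⊗ p` induced on the graph of a function with gradient `p`, as a bilinear
form on the base space. -/
def graphMetric (p : E) : E →L[ℝ] E →L[ℝ] ℝ :=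
  innerBilin + (innerSL ℝ p).smulRight (innerSL ℝ p)

lemma graphMetric_apply (p v w : E) : graphMetric p v w = ⟪v, w⟫ + ⟪p, v⟫ * ⟪p, w⟫ := by
  simp [graphMetric, innerBilin_apply]

variable {ι : Type*} [Fintype ι] (b : OrthonormalBasis ι ℝ E)

/-- The trace of a bilinear form with respect to `graphMetric p`: the contraction with the inverse
metric `δ - p ⊗ p / (1 + |p|²)`, computed in an orthonormal basis of the base space. -/
def graphTrace (p : E) : (E →L[ℝ] E →L[ℝ] ℝ) →ₗ[ℝ] ℝ where
  toFun B := ∑ i, B (b i) (b i) - B p p / (1 + ‖p‖ ^ 2)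
  map_add' B C := by
    simp only [add_apply, Finset.sum_add_distrib]
    ring
  map_smul' c B := by
    simp only [smul_apply, smul_eq_mul, ← Finset.mul_sum, RingHom.id_apply]
    ring

lemma graphTrace_apply (p : E) (B : E →L[ℝ] E →L[ℝ] ℝ) :
    graphTrace b p B = ∑ i, B (b i) (b i) - B p p / (1 + ‖p‖ ^ 2) := rfl

lemma sum_inner_mul_apply (ℓ : E →L[ℝ] ℝ) (p : E) : ∑ i, ⟪p, b i⟫ * ℓ (b i) = ℓ p := by
  simpa [real_inner_comm] using congrArg ℓ (b.sum_repr' p)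

/- The vectors on the right are the horizontal parts of the tangential projections of an orthonormal
basis of `E × ℝ` onto the tangent space of the graph. -/
lemma graphTrace_eq_sum_tangential (p : E) (B : E →L[ℝ] E →L[ℝ] ℝ) :
    graphTrace b p B =
      ∑ i, B (b i - ((1 + ‖p‖ ^ 2)⁻¹ * ⟪p, b i⟫) • p) (b i - ((1 + ‖p‖ ^ 2)⁻¹ * ⟪p, b i⟫) • p)
        + B ((1 + ‖p‖ ^ 2)⁻¹ • p) ((1 + ‖p‖ ^ 2)⁻¹ • p) := by
  have hpos : 1 + ‖p‖ ^ 2 ≠ 0 := by positivity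
  set s : ℝ := (1 + ‖p‖ ^ 2)⁻¹ with hs
  have hterm (i : ι) : B (b i - (s * ⟪p, b i⟫) • p) (b i - (s * ⟪p, b i⟫) • p)
      = B (b i) (b i) - s * (⟪p, b i⟫ * B (b i) p) - s * (⟪p, b i⟫ * B p (b i))
        + s ^ 2 * B p p * ⟪p, b i⟫ ^ 2 := by
    simp only [map_sub, map_smul, sub_apply, smul_apply, smul_eq_mul]
    ring
  have hright : ∑ i, ⟪p, b i⟫ * B p (b i) = B p p := sum_inner_mul_apply b (B p) p
  have hleft : ∑ i, ⟪p, b i⟫ * B (b i) p = B p p := sum_inner_mul_apply b (B.flip p) p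
  simp only [graphTrace_apply, hterm, Finset.sum_add_distrib, Finset.sum_sub_distrib,
    ← Finset.mul_sum, hleft, hright, b.sum_sq_inner_left, map_smul, smul_apply, smul_eq_mul]
  rw [hs]
  field_simp
  ring

lemma graphTrace_nonneg (p : E) {B : E →L[ℝ] E →L[ℝ] ℝ} (hB : ∀ w, 0 ≤ B w w) :
    0 ≤ graphTrace b p B := by
  rw [graphTrace_eq_sum_tangential]
  exact add_nonneg (Finset.sum_nonneg fun i _ => hB _) (hB _)

lemma graphTrace_graphMetric (p : E) : graphTrace b p (graphMetric p) = Fintype.card ι := by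
  have hpos : 1 + ‖p‖ ^ 2 ≠ 0 := by positivity
  simp only [graphTrace_apply, graphMetric_apply, real_inner_self_eq_norm_sq, b.norm_eq_one,
    Finset.sum_add_distrib, ← sq, b.sum_sq_inner_left, one_pow, Finset.sum_const,
    Finset.card_univ, nsmul_eq_mul, mul_one]
  field_simp
  ring

variable {φ : E → ℝ} {x : E}

lemma contDiffAt_graphSqDist {k : WithTop ℕ∞} (hφ : ContDiffAt ℝ k φ x) (x₀ : E) (c : ℝ) :
    ContDiffAt ℝ k (graphSqDist φ x₀ c) x :=
  ((contDiffAt_id.sub contDiffAt_const).norm_sq ℝ).add ((hφ.sub contDiffAt_const).pow 2)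

lemma fderiv_graphSqDist (hφ : DifferentiableAt ℝ φ x) (x₀ : E) (c : ℝ) :
    fderiv ℝ (graphSqDist φ x₀ c) x
      = (2 : ℝ) • (innerBilin (x - x₀) + (φ x - c) • fderiv ℝ φ x) := by
  refine ((((hasFDerivAt_id x).sub_const x₀).norm_sq.add
    ((hφ.hasFDerivAt.sub_const c).pow 2)).congr_fderiv ?_).fderiv
  ext w
  simp only [id_eq, map_sub, ContinuousLinearMap.comp_id, Nat.add_one_sub_one, pow_one,
    nsmul_eq_mul, Nat.cast_ofNat, add_apply, smul_apply, sub_apply, coe_innerSL_apply, smul_eq_mul,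
    smul_add, innerBilin_apply]
  ring

lemma fderiv_inv_sqrt_one_add_sq_norm_smul_apply {V : E → E} (hV : DifferentiableAt ℝ V x) (w : E) :
    fderiv ℝ (fun y => (√(1 + ‖V y‖ ^ 2))⁻¹ • V y) x w
      = (√(1 + ‖V x‖ ^ 2))⁻¹ •
        (fderiv ℝ V x w - (⟪V x, fderiv ℝ V x w⟫ / (1 + ‖V x‖ ^ 2)) • V x) := by
  have hpos : 0 < 1 + ‖V x‖ ^ 2 := by positivity
  have hsqrt := (hV.hasFDerivAt.norm_sq.const_add 1).sqrt hpos.ne'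
  have hinv := (hasDerivAt_inv (Real.sqrt_pos.2 hpos).ne').comp_hasFDerivAt x hsqrt
  have hsmul := hinv.fun_smul hV.hasFDerivAt
  simp only [Function.comp_apply] at hsmul
  rw [hsmul.fderiv]
  simp only [add_apply, smul_apply, ContinuousLinearMap.smulRight_apply,
    ContinuousLinearMap.comp_apply, innerSL_apply_apply, smul_eq_mul, nsmul_eq_mul,
    Nat.cast_ofNat, Real.sq_sqrt hpos.le]
  match_scalars <;> field_simp

variable [CompleteSpace E]

lemma fderiv_fderiv_graphSqDist (hφ : ContDiffAt ℝ 2 φ x) (x₀ : E) (c : ℝ) :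
    fderiv ℝ (fderiv ℝ (graphSqDist φ x₀ c)) x
      = (2 : ℝ) • (graphMetric (∇ φ x) + (φ x - c) • fderiv ℝ (fderiv ℝ φ) x) := by
  have hfirst : fderiv ℝ (graphSqDist φ x₀ c) =ᶠ[𝓝 x]
      fun y => (2 : ℝ) • (innerBilin (y - x₀) + (φ y - c) • fderiv ℝ φ y) := by
    filter_upwards [hφ.eventually (by simp)] with y hy
    exact fderiv_graphSqDist (hy.differentiableAt (by simp)) x₀ c
  have hφ' : HasFDerivAt φ (fderiv ℝ φ x) x := (hφ.differentiableAt (by simp)).hasFDerivAt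
  have hφ'' : HasFDerivAt (fderiv ℝ φ) (fderiv ℝ (fderiv ℝ φ) x) x :=
    ((hφ.fderiv_right (m := 1) (by norm_num)).differentiableAt (by simp)).hasFDerivAt
  have hinner : HasFDerivAt (fun y => innerBilin (y - x₀)) innerBilin x :=
    innerBilin.hasFDerivAt.comp x ((hasFDerivAt_id x).sub_const x₀)
  rw [hfirst.fderiv_eq,
    ((hinner.fun_add ((hφ'.sub_const c).fun_smul hφ'')).fun_const_smul (2 : ℝ)).fderiv]
  ext v w
  simp only [smul_add, add_apply, smul_apply, ContinuousLinearMap.smulRight_apply,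
    innerBilin_apply, smul_eq_mul, graphMetric_apply, inner_gradient_left]
  ring

lemma graphTrace_fderiv_fderiv_nonneg_of_isLocalMin (hφ : ContDiffAt ℝ 2 φ x) {x₀ : E} {c : ℝ}
    (hmin : IsLocalMin (graphSqDist φ x₀ c) x) :
    0 ≤ Fintype.card ι + (φ x - c) * graphTrace b (∇ φ x) (fderiv ℝ (fderiv ℝ φ) x) := by
  have htrace := graphTrace_nonneg b (∇ φ x)
    (fderiv_fderiv_self_nonneg_of_isLocalMin hmin (contDiffAt_graphSqDist hφ x₀ c))
  rw [fderiv_fderiv_graphSqDist hφ, map_smul, map_add, map_smul, graphTrace_graphMetric] at htrace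
  simpa using htrace

lemma hasFDerivAt_gradient (hφ : ContDiffAt ℝ 2 φ x) :
    HasFDerivAt (∇ φ)
      (InnerProductSpace.continuousLinearMapOfBilin (𝕜 := ℝ) (fderiv ℝ (fderiv ℝ φ) x)) x := by
  have hφ'' : HasFDerivAt (fderiv ℝ φ) (fderiv ℝ (fderiv ℝ φ) x) x :=
    ((hφ.fderiv_right (m := 1) (by norm_num)).differentiableAt (by simp)).hasFDerivAt
  let riesz : StrongDual ℝ E →L[ℝ] E :=
    (InnerProductSpace.toDual ℝ E).symm.toContinuousLinearEquiv.toContinuousLinearMap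
  exact riesz.hasFDerivAt.comp x hφ''

lemma inner_fderiv_gradient (hφ : ContDiffAt ℝ 2 φ x) (v w : E) :
    ⟪fderiv ℝ (∇ φ) x v, w⟫ = fderiv ℝ (fderiv ℝ φ) x v w := by
  rw [(hasFDerivAt_gradient hφ).fderiv, InnerProductSpace.continuousLinearMapOfBilin_apply]

end GraphGeometry

section MeanCurvatureFlow

variable {m : ℕ}

lemma vecDiv_eq_sum_inner (V : EuclideanSpace ℝ (Fin m) → EuclideanSpace ℝ (Fin m))
    (x : EuclideanSpace ℝ (Fin m)) :
    vecDiv V x = ∑ i, ⟪fderiv ℝ V x (EuclideanSpace.basisFun (Fin m) ℝ i),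
      EuclideanSpace.basisFun (Fin m) ℝ i⟫ := by
  simp [vecDiv, EuclideanSpace.inner_single_right]

lemma sqrt_mul_vecDiv_eq_graphTrace {φ : EuclideanSpace ℝ (Fin m) → ℝ}
    {x : EuclideanSpace ℝ (Fin m)} (hφ : ContDiffAt ℝ 2 φ x) :
    √(1 + ‖∇ φ x‖ ^ 2) * vecDiv (fun y => (√(1 + ‖∇ φ y‖ ^ 2))⁻¹ • ∇ φ y) x
      = graphTrace (EuclideanSpace.basisFun (Fin m) ℝ) (∇ φ x) (fderiv ℝ (fderiv ℝ φ) x) := by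
  set b := EuclideanSpace.basisFun (Fin m) ℝ
  set p := ∇ φ x
  set H := fderiv ℝ (fderiv ℝ φ) x
  have hsqrt : √(1 + ‖p‖ ^ 2) ≠ 0 := by positivity
  have hterm (i : Fin m) : ⟪fderiv ℝ (fun y => (√(1 + ‖∇ φ y‖ ^ 2))⁻¹ • ∇ φ y) x (b i), b i⟫
      = (√(1 + ‖p‖ ^ 2))⁻¹ * (H (b i) (b i) - ⟪p, b i⟫ * H (b i) p / (1 + ‖p‖ ^ 2)) := by
    rw [fderiv_inv_sqrt_one_add_sq_norm_smul_apply (hasFDerivAt_gradient hφ).differentiableAt,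
      real_inner_smul_left, inner_sub_left, real_inner_smul_left, real_inner_comm _ (∇ φ x),
      inner_fderiv_gradient hφ, inner_fderiv_gradient hφ]
    ring
  have hcross : ∑ i, ⟪p, b i⟫ * H (b i) p = H p p := sum_inner_mul_apply b (H.flip p) p
  rw [vecDiv_eq_sum_inner, Finset.sum_congr rfl fun i _ => hterm i, ← Finset.mul_sum,
    Finset.sum_sub_distrib, ← Finset.sum_div, hcross, mul_inv_cancel_left₀ hsqrt, graphTrace_apply]

variable {u : EuclideanSpace ℝ (Fin m) × ℝ → ℝ} {x₀ : EuclideanSpace ℝ (Fin m)} {t₁ : ℝ}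

lemma mcfEqAt_iff_deriv_eq_graphTrace {x : EuclideanSpace ℝ (Fin m)} {t : ℝ}
    (hu : ContDiffAt ℝ 2 (fun y => u (y, t)) x) :
    mcfEqAt u x t ↔ deriv (fun s => u (x, s)) t
      = graphTrace (EuclideanSpace.basisFun (Fin m) ℝ) (spatialGrad u x t)
        (fderiv ℝ (fderiv ℝ fun y => u (y, t)) x) :=
  Eq.congr_right (sqrt_mul_vecDiv_eq_graphTrace hu)

lemma neg_two_mul_le_deriv_graphSqDist_of_isLocalMin {x : EuclideanSpace ℝ (Fin m)} {t c : ℝ}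
    (hu : ContDiffAt ℝ 2 u (x, t)) (heq : mcfEqAt u x t)
    (hmin : IsLocalMin (graphSqDist (fun y => u (y, t)) x₀ c) x) :
    -(2 * m) ≤ deriv (fun s => graphSqDist (fun y => u (y, s)) x₀ c x) t := by
  have hspace : ContDiffAt ℝ 2 (fun y => u (y, t)) x := hu.comp x (by fun_prop)
  have htrace := graphTrace_fderiv_fderiv_nonneg_of_isLocalMin
    (EuclideanSpace.basisFun (Fin m) ℝ) hspace hmin
  rw [Fintype.card_fin] at htrace
  rw [(hasDerivAt_graphSqDist_time (hu.differentiableAt (by simp)) x₀ c).deriv,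
    (mcfEqAt_iff_deriv_eq_graphTrace hspace).1 heq, spatialGrad]
  linarith

/- The shrinking spherical barrier: the ball of radius `√(r ^ 2 - 2 * m * (t - t₁))` about `(x₀, c)`
stays off the graph. -/
lemma sq_le_graphSqDist_add_of_mcfEqAt {r t c : ℝ} (hu : ContDiffOn ℝ 2 u {p | t₁ ≤ p.2})
    (heq : ∀ x t, t₁ < t → mcfEqAt u x t) (hr : 0 < r)
    (hinit : ∀ x, r ^ 2 ≤ graphSqDist (fun y => u (y, t₁)) x₀ c x) (ht : t₁ ≤ t)
    (x : EuclideanSpace ℝ (Fin m)) :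
    r ^ 2 ≤ graphSqDist (fun y => u (y, t)) x₀ c x + 2 * m * (t - t₁) := by
  have hfar {y : EuclideanSpace ℝ (Fin m)} {s : ℝ} (hy : r ≤ ‖y - x₀‖) (hs : t₁ ≤ s) :
      r ^ 2 ≤ graphSqDist (fun z => u (z, s)) x₀ c y + 2 * m * (s - t₁) :=
    calc r ^ 2 ≤ ‖y - x₀‖ ^ 2 := pow_le_pow_left₀ hr.le hy 2
      _ ≤ graphSqDist (fun z => u (z, s)) x₀ c y := sq_norm_sub_le_graphSqDist _ _ _ _
      _ ≤ _ := le_add_of_nonneg_right (mul_nonneg (by positivity) (sub_nonneg.2 hs))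
  rcases le_total r ‖x - x₀‖ with hx | hx
  · exact hfar hx ht
  have hcont : ContinuousOn (fun q : EuclideanSpace ℝ (Fin m) × ℝ =>
      graphSqDist (fun y => u (y, q.2)) x₀ c q.1 + 2 * m * (q.2 - t₁))
      (closedBall x₀ r ×ˢ Icc t₁ t) := by
    have huc : ContinuousOn u (closedBall x₀ r ×ˢ Icc t₁ t) :=
      hu.continuousOn.mono fun q hq => hq.2.1
    unfold graphSqDist
    fun_prop
  have hdiff (y : EuclideanSpace ℝ (Fin m)) {s : ℝ} (hs : t₁ < s) :
      DifferentiableAt ℝ (fun s => graphSqDist (fun z => u (z, s)) x₀ c y) s :=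
    (hasDerivAt_graphSqDist_time
      ((contDiffAt_of_initialTime_lt hu y hs).differentiableAt (by simp)) x₀ c).differentiableAt
  refine le_of_deriv_nonneg_of_isLocalMin
    (f := fun y s => graphSqDist (fun z => u (z, s)) x₀ c y + 2 * m * (s - t₁))
    (isCompact_closedBall x₀ r) hcont (fun y _ s hs => (hdiff y hs.1).add (by fun_prop))
    (by simpa using fun y _ => hinit y) (fun y hy s hs => hfar ?_ hs.1)
    (fun y _ s hs hmin => ?_) (mem_closedBall_iff_norm.2 hx) (right_mem_Icc.2 ht)
  · rw [frontier_closedBall _ hr.ne', mem_sphere_iff_norm] at hy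
    exact hy.ge
  · have hderiv := (hdiff y hs.1).hasDerivAt.fun_add
      (((hasDerivAt_id' s).sub_const t₁).const_mul (2 * m : ℝ))
    have hmin' : IsLocalMin (graphSqDist (fun z => u (z, s)) x₀ c) y := by
      filter_upwards [hmin] with z hz using le_of_add_le_add_right hz
    have hle := neg_two_mul_le_deriv_graphSqDist_of_isLocalMin
      (contDiffAt_of_initialTime_lt hu y hs.1) (heq y s hs.1) hmin'
    rw [hderiv.deriv]
    linarith

theorem mcf_sphere_barrier_estimate_general {M r t : ℝ} (hu : ContDiffOn ℝ 2 u {p | t₁ ≤ p.2})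
    (heq : ∀ x t, t₁ < t → mcfEqAt u x t) (hM : 0 < M) (hr : 0 < r)
    (hgrad : ∀ x ∈ ball x₀ r, u (x, t₁) ≤ 0 → ‖spatialGrad u x t₁‖ ≤ M)
    (hneg : u (x₀, t₁) + M * r ≤ 0) (ht : t₁ ≤ t) (htr : 2 * m * (t - t₁) ≤ r ^ 2) :
    u (x₀, t) ∈ Icc (u (x₀, t₁) - (M + 1) * r) (u (x₀, t₁) + (M + 1) * r) := by
  rw [← mem_Icc_iff_abs_le]
  by_contra! hfast
  have hpath : ContinuousOn (fun s => |u (x₀, t₁) - u (x₀, s)|) (Icc t₁ t) :=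
    (continuousOn_const.sub (hu.continuousOn.comp (by fun_prop) fun s hs => hs.1)).abs
  obtain ⟨s, hs, hsep⟩ := intermediate_value_Icc ht hpath
    (show (M + 1) * r ∈ _ from ⟨by simpa using by positivity, hfast.le⟩)
  have hst : s < t := hs.2.lt_of_ne (by rintro rfl; exact hfast.ne' hsep)
  have hbound (y) (hy : y ∈ ball x₀ r) (hle : u (y, t₁) ≤ u (x₀, t₁) + M * r) :
      ‖fderiv ℝ (fun z => u (z, t₁)) y‖ ≤ M := by
    rw [← toDual_gradient, LinearIsometryEquiv.norm_map]
    exact hgrad y hy (hle.trans hneg)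
  have hinit := sq_le_graphSqDist_of_norm_fderiv_le hM hr.le
    (fun y _ => (contDiff_spatial_slice hu le_rfl).differentiable (by simp) y) hbound hsep.ge
  have havoid := sq_le_graphSqDist_add_of_mcfEqAt hu heq hr hinit hs.1 x₀
  have hvanish : r ^ 2 ≤ 2 * m * (s - t₁) := by simpa [graphSqDist] using havoid
  have hm : (0 : ℝ) < 2 * m :=
    pos_of_mul_pos_left ((pow_pos hr 2).trans_le hvanish) (sub_nonneg.2 hs.1)
  have hless : 2 * m * (s - t₁) < 2 * m * (t - t₁) := by gcongr
  exact (hvanish.trans_lt hless).not_ge htr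

end MeanCurvatureFlow

/-- **Two-sided barrier estimate.**  Let `u : ℝ^{n+1} × [0,∞) → ℝ` be a smooth graphical
solution to mean curvature flow, `M ≥ 1` with `|Du(x,t)| ≤ M` wherever `u(x,t) ≤ 0`.
If `u(x₀,t₁) ≤ -1` and `0 < r ≤ 1/M`, then
`u(x₀,t₁) - (M+1)r ≤ u(x₀, t₁ + r²/(2(n+1))) ≤ u(x₀,t₁) + (M+1)r`. -/
theorem mcf_sphere_barrier_estimate (n : ℕ) (hn : 1 ≤ n)
    (u : EuclideanSpace ℝ (Fin (n + 1)) × ℝ → ℝ)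
    -- u is a smooth graphical solution to mean curvature flow on ℝ^{n+1} × [0,∞)
    (hu_smooth : ContDiffOn ℝ (⊤ : ℕ∞) u {p : EuclideanSpace ℝ (Fin (n + 1)) × ℝ | 0 ≤ p.2})
    (hu_eq : ∀ (x : EuclideanSpace ℝ (Fin (n + 1))) (t : ℝ), 0 < t → mcfEqAt u x t)
    (M : ℝ) (hM : 1 ≤ M)
    -- |Du(x,t)| ≤ M at all points where u(x,t) ≤ 0
    (hgrad : ∀ (x : EuclideanSpace ℝ (Fin (n + 1))) (t : ℝ), 0 ≤ t → u (x, t) ≤ 0 →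
      ‖spatialGrad u x t‖ ≤ M)
    (x₀ : EuclideanSpace ℝ (Fin (n + 1))) (t₁ : ℝ) (ht₁ : 0 ≤ t₁)
    (hneg : u (x₀, t₁) ≤ -1)
    (r : ℝ) (hr : 0 < r) (hrM : r ≤ 1 / M) :
    u (x₀, t₁) - (M + 1) * r ≤ u (x₀, t₁ + r ^ 2 / (2 * (n + 1))) ∧
      u (x₀, t₁ + r ^ 2 / (2 * (n + 1))) ≤ u (x₀, t₁) + (M + 1) * r := by
  have hu : ContDiffOn ℝ 2 u {p | t₁ ≤ p.2} :=
    (hu_smooth.of_le ENat.LEInfty.out).mono fun _ hp => ht₁.trans hp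
  have hMr : M * r ≤ 1 := (le_div_iff₀' (by positivity)).1 hrM
  refine mcf_sphere_barrier_estimate_general hu (fun x t ht => hu_eq x t (ht₁.trans_lt ht))
    (by positivity) hr (fun x _ => hgrad x t₁ ht₁) (by linarith)
    (le_add_of_nonneg_right (by positivity)) ?_
  rw [add_sub_cancel_left, Nat.cast_succ, mul_div_cancel₀ _ (by positivity)]
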